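/- Let p be a prime, n ≥ 1, and suppose the function x ↦ e(|x|/p²) on F_p^n (for p = 2 use e(|x|/8)) taking values in ℂ admits a decomposition e(P(x)) = Σ_{i=1}^r c_i · e(Q_i(x)) · 1_{H_i}(x), where H_i ⊆ F_p^n are affine subspaces, Q_i : H_i → ℝ/ℤ are nonclassical polynomials of degree at most 2 on H_i, and c_i ∈ ℂ. Then r = Ω(n); more precisely there is a constant C = C(p) > 0 such that r ≥ n/C. -/

import Mathlib

open scoped BigOperators Classical

/-- Additive derivative of a map `P` in direction `h`. -/
def addDeriv {G M : Type*} [Add G] [Sub M] (h : G) (P : G → M) : G → M :=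
  fun x => P (x + h) - P x

/-- The exponential `e(t) = exp(2πit)` on `ℝ/ℤ`. -/
noncomputable def ee (t : AddCircle (1 : ℝ)) : ℂ := (AddCircle.toCircle t : ℂ)

/-- The phase of the `n`-qudit magic state: `|x|/8` for `p = 2` and `|x|/p²` for odd `p`. -/
noncomputable def magicPhase (p n : ℕ) (x : Fin n → ZMod p) : AddCircle (1 : ℝ) :=
  if p = 2 then (((∑ i, ((x i).val : ℝ)) / 8 : ℝ) : AddCircle (1 : ℝ))
  else (((∑ i, ((x i).val : ℝ)) / (p : ℝ) ^ 2 : ℝ) : AddCircle (1 : ℝ))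

/-!
Up to additive constants the quadratic phases on a space of exponent `N` take values in
`(1 / N²)ℤ / ℤ`, so the terms of a decomposition into `r` stabilizer states cut the space into at
most `(N² + 1) ^ r` cells on each of which the decomposed function `f` is constant. Indicators of
affine subspaces and of fibres of quadratic maps are averages of quadratic phases, hence restricting
`f` to a cell multiplies its largest correlation with quadratic phases by at most `2 ^ r`. As `f` is
constant of modulus one on the cell, that correlation is at least the size of the cell. On the other
hand the Gowers `U³` norm bounds correlations with quadratic phases and is multiplicative on
products, so for an `n`-fold product of a nonquadratic phase they are exponentially small in `n`.
-/

section Exponential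

lemma ee_add (s t : UnitAddCircle) : ee (s + t) = ee s * ee t := by
  simp only [ee, AddCircle.toCircle_add, Circle.coe_mul]

lemma ee_zero : ee 0 = 1 := by
  simp only [ee, AddCircle.toCircle_zero, Circle.coe_one]

lemma ee_neg (t : UnitAddCircle) : ee (-t) = starRingEnd ℂ (ee t) := by
  simp only [ee, AddCircle.toCircle_neg, Circle.coe_inv_eq_conj]

lemma norm_ee (t : UnitAddCircle) : ‖ee t‖ = 1 :=
  Circle.norm_coe _

lemma ee_injective : Function.Injective ee :=
  Subtype.coe_injective.comp (AddCircle.injective_toCircle one_ne_zero)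

lemma ee_sum {ι : Type*} (s : Finset ι) (f : ι → UnitAddCircle) :
    ee (∑ i ∈ s, f i) = ∏ i ∈ s, ee (f i) := by
  induction s using Finset.induction_on with
  | empty => rw [Finset.sum_empty, Finset.prod_empty, ee_zero]
  | insert i s hi ih => rw [Finset.sum_insert hi, Finset.prod_insert hi, ee_add, ih]

lemma exists_ee_eq_of_norm_eq_one {z : ℂ} (hz : ‖z‖ = 1) : ∃ t, ee t = z := by
  obtain ⟨t, ht⟩ := (AddCircle.homeomorphCircle (T := 1) one_ne_zero).surjective
    ⟨z, mem_sphere_zero_iff_norm.2 hz⟩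
  rw [AddCircle.homeomorphCircle_apply] at ht
  exact ⟨t, congrArg Subtype.val ht⟩

lemma exists_addMonoidHom_ee_eq {A : Type*} [AddCommGroup A] [Finite A] (ψ : AddChar A ℂ) :
    ∃ χ : A →+ UnitAddCircle, ∀ a, ee (χ a) = ψ a := by
  choose χ hχ using fun a => exists_ee_eq_of_norm_eq_one (ψ.norm_apply a)
  refine ⟨AddMonoidHom.mk' χ fun a b => ee_injective ?_, hχ⟩
  rw [ee_add, hχ, hχ, hχ, AddChar.map_add_eq_mul]

end Exponential

section Quadratic

variable {G M E : Type*} [AddCommGroup G] [AddCommGroup M] [AddCommGroup E]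

/-- A map between abelian groups is quadratic if all its third additive derivatives vanish. For
maps into `ℝ/ℤ` these are the nonclassical polynomials of degree at most two. -/
def IsQuadratic (Q : G → M) : Prop :=
  ∀ h₁ h₂ h₃ x, addDeriv h₃ (addDeriv h₂ (addDeriv h₁ Q)) x = 0

lemma isQuadratic_zero : IsQuadratic (0 : G → M) := by
  intro h₁ h₂ h₃ x
  simp only [addDeriv, Pi.zero_apply, sub_self]

lemma isQuadratic_addMonoidHom (φ : G →+ M) : IsQuadratic φ := by
  intro h₁ h₂ h₃ x
  simp only [addDeriv, map_add, add_sub_cancel_left, sub_self]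

lemma IsQuadratic.add {P Q : G → M} (hP : IsQuadratic P) (hQ : IsQuadratic Q) :
    IsQuadratic (P + Q) := by
  intro h₁ h₂ h₃ x
  have hsum := congrArg₂ (· + ·) (hP h₁ h₂ h₃ x) (hQ h₁ h₂ h₃ x)
  simp only [addDeriv, Pi.add_apply, add_zero] at hsum ⊢
  rw [← hsum]
  abel

lemma IsQuadratic.sub_const {Q : G → M} (hQ : IsQuadratic Q) (m : M) :
    IsQuadratic fun x => Q x - m := by
  simpa only [IsQuadratic, addDeriv, sub_sub_sub_cancel_right] using hQ

lemma IsQuadratic.addMonoidHom_comp {Q : G → M} (hQ : IsQuadratic Q) (φ : M →+ E) :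
    IsQuadratic fun x => φ (Q x) := by
  intro h₁ h₂ h₃ x
  simpa only [addDeriv, map_sub, map_zero] using congrArg φ (hQ h₁ h₂ h₃ x)

lemma IsQuadratic.of_addMonoidHom_comp {Q : G → M} {φ : M →+ E} (hφ : Function.Injective φ)
    (hQ : IsQuadratic fun x => φ (Q x)) : IsQuadratic Q := by
  intro h₁ h₂ h₃ x
  apply hφ
  simpa only [addDeriv, map_sub, map_zero] using hQ h₁ h₂ h₃ x

lemma mul_nsmul_sub_apply_zero {g : G → M} {k N : ℕ} (hN : ∀ y : G, N • y = 0)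
    (hg : ∀ h x, k • (addDeriv h g x - addDeriv h g 0) = 0) (x : G) :
    (k * N) • (g x - g 0) = 0 := by
  have map_add (x y : G) : k • (g (x + y) - g 0) = k • (g x - g 0) + k • (g y - g 0) := by
    have hxy := hg y x
    simp only [addDeriv, zero_add] at hxy
    rw [← sub_eq_zero, ← hxy]
    simp only [nsmul_sub]
    abel
  let L : G →+ M := AddMonoidHom.mk' (fun x => k • (g x - g 0)) map_add
  calc (k * N) • (g x - g 0) = N • L x := mul_nsmul _ _ _
    _ = 0 := by rw [← map_nsmul, hN, map_zero]

-- Each antiderivative costs one factor of `N`; the second derivatives are constant.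
lemma IsQuadratic.sq_nsmul_sub_apply_zero {Q : G → M} (hQ : IsQuadratic Q) {N : ℕ}
    (hN : ∀ y : G, N • y = 0) (x : G) : (N ^ 2) • (Q x - Q 0) = 0 := by
  have second_deriv_const (h₁ h₂ x : G) :
      addDeriv h₂ (addDeriv h₁ Q) x = addDeriv h₂ (addDeriv h₁ Q) 0 := by
    have h := hQ h₁ h₂ x 0
    rwa [addDeriv, zero_add, sub_eq_zero] at h
  have first_deriv_torsion (h x : G) : N • (addDeriv h Q x - addDeriv h Q 0) = 0 := by
    simpa only [one_mul] using mul_nsmul_sub_apply_zero (k := 1) hN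
      (fun h₂ y => by rw [second_deriv_const, sub_self, nsmul_zero]) x
  rw [sq]
  exact mul_nsmul_sub_apply_zero hN first_deriv_torsion x

lemma exists_toAddCircle_eq {N : ℕ} [NeZero N] {t : UnitAddCircle} (ht : N • t = 0) :
    ∃ a : ZMod N, ZMod.toAddCircle a = t := by
  obtain ⟨m, -, hm⟩ := (AddCircle.nsmul_eq_zero_iff (NeZero.pos N)).1 ht
  exact ⟨m, by rw [ZMod.toAddCircle_natCast, ← hm, mul_one]⟩

lemma IsQuadratic.exists_toAddCircle_eq_sub {Q : G → UnitAddCircle} (hQ : IsQuadratic Q) {N : ℕ}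
    [NeZero N] (hN : ∀ y : G, N • y = 0) :
    ∃ q : G → ZMod (N ^ 2), IsQuadratic q ∧ ∀ x, ZMod.toAddCircle (q x) = Q x - Q 0 := by
  choose q hq using fun x => exists_toAddCircle_eq (hQ.sq_nsmul_sub_apply_zero hN x)
  refine ⟨q, IsQuadratic.of_addMonoidHom_comp (ZMod.toAddCircle_injective _) ?_, hq⟩
  simpa only [hq] using hQ.sub_const (Q 0)

end Quadratic

section QuadraticOn

variable {K V M : Type*} [AddCommGroup V] [AddCommGroup M]

/-- `Q` is quadratic on the affine subspace `H`: its third additive derivatives in directions of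
`H` vanish at the points of `H`. The values of `Q` off `H` are irrelevant. -/
def IsQuadraticOn [Ring K] [Module K V] (H : AffineSubspace K V) (Q : V → M) : Prop :=
  ∀ h₁ ∈ H.direction, ∀ h₂ ∈ H.direction, ∀ h₃ ∈ H.direction, ∀ x ∈ H,
    addDeriv h₃ (addDeriv h₂ (addDeriv h₁ Q)) x = 0

variable [DivisionRing K] [Module K V]

-- Precompose `Q` with an affine projection onto `H`.
lemma IsQuadraticOn.exists_isQuadratic_eqOn {H : AffineSubspace K V} {Q : V → M}
    (hQ : IsQuadraticOn H Q) : ∃ Q' : V → M, IsQuadratic Q' ∧ Set.EqOn Q' Q H := by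
  obtain rfl | ⟨v, hv⟩ := H.eq_bot_or_nonempty
  · exact ⟨0, isQuadratic_zero, fun x hx => hx.elim⟩
  obtain ⟨π, hπ⟩ := H.direction.subtype.exists_leftInverse_of_injective H.direction.ker_subtype
  let P : V → V := fun x => (π (x - v) : V) + v
  have P_mem (x : V) : P x ∈ H := AffineSubspace.vadd_mem_of_mem_direction (π (x - v)).2 hv
  have P_add (x h : V) : P (x + h) = P x + π h := by
    simp only [P, add_sub_right_comm, map_add, Submodule.coe_add, add_right_comm]
  refine ⟨fun x => Q (P x), fun h₁ h₂ h₃ x => ?_, fun x hx => ?_⟩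
  · simpa only [addDeriv, P_add] using
      hQ _ (π h₁).2 _ (π h₂).2 _ (π h₃).2 _ (P_mem x)
  · have hdir : x - v ∈ H.direction := AffineSubspace.vsub_mem_direction hx hv
    have hfix : π (x - v) = ⟨x - v, hdir⟩ := LinearMap.congr_fun hπ ⟨x - v, hdir⟩
    simp only [P, hfix, sub_add_cancel]

lemma IsQuadraticOn.exists_isQuadratic_zmod {H : AffineSubspace K V} {Q : V → UnitAddCircle}
    (hQ : IsQuadraticOn H Q) {N : ℕ} [NeZero N] (hN : ∀ y : V, N • y = 0) :
    ∃ q : V → ZMod (N ^ 2), IsQuadratic q ∧ ∀ x ∈ H, ∀ y ∈ H, q x = q y → Q x = Q y := by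
  obtain ⟨Q', hQ', hQQ'⟩ := hQ.exists_isQuadratic_eqOn
  obtain ⟨q, hq, hqQ'⟩ := hQ'.exists_toAddCircle_eq_sub hN
  refine ⟨q, hq, fun x hx y hy hxy => ?_⟩
  rw [← hQQ' hx, ← hQQ' hy, ← sub_left_inj (a := Q' 0), ← hqQ', ← hqQ', hxy]

end QuadraticOn

section Gowers

variable {G : Type*} [AddCommGroup G] [Fintype G]

/-- The exponential sum of a phase function. -/
noncomputable def phaseSum (R : G → UnitAddCircle) : ℂ :=
  ∑ x, ee (R x)

/-- The sum of a phase function over all three-dimensional cubes, i.e. the eighth power of the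
Gowers `U³` norm of `ee ∘ R` without its normalisation by `|G| ^ 4`. -/
noncomputable def gowersSum (R : G → UnitAddCircle) : ℂ :=
  ∑ h₁, ∑ h₂, ∑ h₃, phaseSum (addDeriv h₃ (addDeriv h₂ (addDeriv h₁ R)))

lemma norm_phaseSum_sq (R : G → UnitAddCircle) :
    (‖phaseSum R‖ ^ 2 : ℂ) = ∑ h, phaseSum (addDeriv h R) := by
  calc (‖phaseSum R‖ ^ 2 : ℂ) = ∑ x, ∑ y, ee (R y) * starRingEnd ℂ (ee (R x)) := by
        rw [← Complex.mul_conj', phaseSum, map_sum, Finset.sum_mul_sum, Finset.sum_comm]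
    _ = ∑ x, ∑ h, ee (addDeriv h R x) := by
        refine Finset.sum_congr rfl fun x _ => ?_
        rw [← Equiv.sum_comp (Equiv.addLeft x)]
        simp only [Equiv.coe_addLeft, addDeriv, sub_eq_add_neg, ee_add, ee_neg]
    _ = ∑ h, phaseSum (addDeriv h R) := Finset.sum_comm

lemma norm_phaseSum_pow_four_le (R : G → UnitAddCircle) :
    ‖phaseSum R‖ ^ 4 ≤ Fintype.card G * ∑ h, ‖phaseSum (addDeriv h R)‖ ^ 2 := by
  have norm_sq_le : ‖phaseSum R‖ ^ 2 ≤ ∑ h, ‖phaseSum (addDeriv h R)‖ := by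
    calc ‖phaseSum R‖ ^ 2 = ‖∑ h, phaseSum (addDeriv h R)‖ := by
          rw [← norm_phaseSum_sq, norm_pow, Complex.norm_real, norm_norm]
      _ ≤ ∑ h, ‖phaseSum (addDeriv h R)‖ := norm_sum_le _ _
  calc ‖phaseSum R‖ ^ 4 = (‖phaseSum R‖ ^ 2) ^ 2 := by ring
    _ ≤ (∑ h, ‖phaseSum (addDeriv h R)‖) ^ 2 := by gcongr
    _ ≤ (Fintype.card G : ℝ) * ∑ h, ‖phaseSum (addDeriv h R)‖ ^ 2 := sq_sum_le_card_mul_sum_sq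

lemma sum_norm_phaseSum_sq_eq_gowersSum (R : G → UnitAddCircle) :
    ((∑ h₁, ∑ h₂, ‖phaseSum (addDeriv h₂ (addDeriv h₁ R))‖ ^ 2 : ℝ) : ℂ) = gowersSum R := by
  push_cast
  simp only [norm_phaseSum_sq, gowersSum]

theorem norm_phaseSum_pow_eight_le (R : G → UnitAddCircle) :
    ‖phaseSum R‖ ^ 8 ≤ (Fintype.card G : ℝ) ^ 4 * ‖gowersSum R‖ := by
  set N := (Fintype.card G : ℝ)
  calc ‖phaseSum R‖ ^ 8 = (‖phaseSum R‖ ^ 4) ^ 2 := by ring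
    _ ≤ (N * ∑ h, ‖phaseSum (addDeriv h R)‖ ^ 2) ^ 2 := by
        gcongr
        exact norm_phaseSum_pow_four_le R
    _ = N ^ 2 * (∑ h, ‖phaseSum (addDeriv h R)‖ ^ 2) ^ 2 := by ring
    _ ≤ N ^ 2 * (N * ∑ h, (‖phaseSum (addDeriv h R)‖ ^ 2) ^ 2) := by
        gcongr
        exact sq_sum_le_card_mul_sum_sq
    _ = N ^ 2 * (N * ∑ h, ‖phaseSum (addDeriv h R)‖ ^ 4) := by simp only [← pow_mul]
    _ ≤ N ^ 2 * (N * ∑ h₁, N * ∑ h₂, ‖phaseSum (addDeriv h₂ (addDeriv h₁ R))‖ ^ 2) := by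
        gcongr with h₁
        exact norm_phaseSum_pow_four_le _
    _ = N ^ 4 * ∑ h₁, ∑ h₂, ‖phaseSum (addDeriv h₂ (addDeriv h₁ R))‖ ^ 2 := by
        rw [← Finset.mul_sum]
        ring
    _ ≤ N ^ 4 * ‖gowersSum R‖ := by
        rw [← sum_norm_phaseSum_sq_eq_gowersSum, Complex.norm_real]
        gcongr
        exact le_abs_self _

lemma gowersSum_add_of_isQuadratic (R : G → UnitAddCircle) {Q : G → UnitAddCircle}
    (hQ : IsQuadratic Q) : gowersSum (R + Q) = gowersSum R := by
  have third_deriv (h₁ h₂ h₃ : G) : addDeriv h₃ (addDeriv h₂ (addDeriv h₁ (R + Q))) =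
      addDeriv h₃ (addDeriv h₂ (addDeriv h₁ R)) := by
    funext x
    rw [← sub_eq_zero, ← hQ h₁ h₂ h₃ x]
    simp only [addDeriv, Pi.add_apply]
    abel
  simp only [gowersSum, third_deriv]

lemma norm_sum_lt_card_of_ne {ι : Type*} [Fintype ι] {z : ι → ℂ} (hz : ∀ i, ‖z i‖ = 1) {i j : ι}
    (hij : z i ≠ z j) : ‖∑ k, z k‖ < Fintype.card ι := by
  have : Nonempty ι := ⟨i⟩
  have hcard : (Fintype.card ι : ℝ) ≠ 0 := Nat.cast_ne_zero.2 Fintype.card_ne_zero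
  have hmean : ‖∑ k, (Fintype.card ι : ℝ)⁻¹ • z k‖ < 1 :=
    norm_sum_lt_of_strictConvexSpace (fun _ _ => by positivity)
      (by simp [hcard]) (Finset.mem_univ i) (Finset.mem_univ j) hij (inv_ne_zero hcard)
      (inv_ne_zero hcard) (fun k _ => (hz k).le)
  rw [← Finset.smul_sum, norm_smul, norm_inv, Real.norm_natCast] at hmean
  rwa [inv_mul_lt_one₀ (by positivity)] at hmean

theorem norm_gowersSum_lt_of_not_isQuadratic {R : G → UnitAddCircle} (hR : ¬ IsQuadratic R) :
    ‖gowersSum R‖ < (Fintype.card G : ℝ) ^ 4 := by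
  simp only [IsQuadratic, not_forall] at hR
  obtain ⟨h₁, h₂, h₃, x, hx⟩ := hR
  let cubePhase : G × G × G × G → UnitAddCircle := fun c =>
    addDeriv c.2.2.1 (addDeriv c.2.1 (addDeriv c.1 R)) c.2.2.2
  have cubePhase_zero : cubePhase (0, 0, 0, 0) = 0 := by simp [cubePhase, addDeriv]
  have cubePhase_ne : ee (cubePhase (h₁, h₂, h₃, x)) ≠ ee (cubePhase (0, 0, 0, 0)) := by
    rw [cubePhase_zero]
    exact ee_injective.ne hx
  have hlt := norm_sum_lt_card_of_ne (fun c => norm_ee (cubePhase c)) cubePhase_ne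
  simp only [Fintype.sum_prod_type, Fintype.card_prod] at hlt
  calc ‖gowersSum R‖ < _ := hlt
    _ = (Fintype.card G : ℝ) ^ 4 := by
        push_cast
        ring

theorem gowersSum_pi {κ : Type*} [Fintype κ] [DecidableEq κ] {A : κ → Type*}
    [∀ j, AddCommGroup (A j)] [∀ j, Fintype (A j)] (φ : ∀ j, A j → UnitAddCircle) :
    gowersSum (fun x : ∀ j, A j => ∑ j, φ j (x j)) = ∏ j, gowersSum (φ j) := by
  simp only [gowersSum, phaseSum, Fintype.prod_sum, addDeriv, ← Finset.sum_sub_distrib, ee_sum,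
    Pi.add_apply]

end Gowers

section QuadraticBound

variable {G : Type*} [AddCommGroup G] [Fintype G]

/-- `f` has (unnormalised) correlation at most `B` with every quadratic phase function. -/
def QuadraticBound (f : G → ℂ) (B : ℝ) : Prop :=
  ∀ Q : G → UnitAddCircle, IsQuadratic Q → ‖∑ x, f x * ee (Q x)‖ ≤ B

namespace QuadraticBound

variable {f g : G → ℂ} {B B' : ℝ}

lemma norm_sum_le (hf : QuadraticBound f B) : ‖∑ x, f x‖ ≤ B := by
  simpa only [Pi.zero_apply, ee_zero, mul_one] using hf 0 isQuadratic_zero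

lemma nonneg (hf : QuadraticBound f B) : 0 ≤ B :=
  (norm_nonneg _).trans hf.norm_sum_le

lemma mono (hf : QuadraticBound f B) (hB : B ≤ B') : QuadraticBound f B' :=
  fun Q hQ => (hf Q hQ).trans hB

lemma sub (hf : QuadraticBound f B) (hg : QuadraticBound g B') :
    QuadraticBound (f - g) (B + B') := by
  intro Q hQ
  simp only [Pi.sub_apply, sub_mul, Finset.sum_sub_distrib]
  exact (norm_sub_le _ _).trans (add_le_add (hf Q hQ) (hg Q hQ))

-- The indicator of a fibre of `q` is the average over the characters `ψ` of `A` of the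
-- quadratic phases `ψ (q x - a)`.
theorem indicator_fiber {A : Type*} [AddCommGroup A] [Finite A] (hf : QuadraticBound f B)
    {q : G → A} (hq : IsQuadratic q) (a : A) :
    QuadraticBound ({x | q x = a}.indicator f) B := by
  have := Fintype.ofFinite A
  intro Q hQ
  choose χ hχ using exists_addMonoidHom_ee_eq (A := A)
  let Qψ : AddChar A ℂ → G → UnitAddCircle := fun ψ => Q + fun x => χ ψ (q x - a)
  have hQψ (ψ : AddChar A ℂ) : IsQuadratic (Qψ ψ) :=
    hQ.add ((hq.sub_const a).addMonoidHom_comp (χ ψ))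
  have sum_chars (x : G) : ∑ ψ, f x * ee (Qψ ψ x) =
      Fintype.card A * ({x | q x = a}.indicator f x * ee (Q x)) := by
    simp only [Qψ, Pi.add_apply, ee_add, hχ, ← mul_assoc, ← Finset.mul_sum,
      AddChar.sum_apply_eq_ite, sub_eq_zero, Set.indicator_apply, Set.mem_ofPred_eq]
    split_ifs <;> ring
  have hcard : (0 : ℝ) < Fintype.card A := Nat.cast_pos.2 Fintype.card_pos
  refine le_of_mul_le_mul_left ?_ hcard
  calc Fintype.card A * ‖∑ x, {x | q x = a}.indicator f x * ee (Q x)‖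
      = ‖∑ ψ, ∑ x, f x * ee (Qψ ψ x)‖ := by
        rw [Finset.sum_comm]
        simp only [sum_chars]
        rw [← Finset.mul_sum, norm_mul, Complex.norm_natCast]
    _ ≤ ∑ _ψ : AddChar A ℂ, B := norm_sum_le_of_le _ fun ψ _ => hf _ (hQψ ψ)
    _ = Fintype.card A * B := by
        rw [Finset.sum_const, Finset.card_univ, AddChar.card_eq, nsmul_eq_mul]

lemma indicator_affineSubspace {R : Type*} [Ring R] [Module R G] (hf : QuadraticBound f B)
    (H : AffineSubspace R G) : QuadraticBound ((H : Set G).indicator f) B := by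
  obtain rfl | ⟨v, hv⟩ := H.eq_bot_or_nonempty
  · intro Q _
    simpa using hf.nonneg
  let π : G →+ G ⧸ H.direction := H.direction.mkQ.toAddMonoidHom
  have hH : (H : Set G) = {x | π x = π v} := by
    ext x
    exact ((Submodule.Quotient.eq _).trans
      (AffineSubspace.vsub_right_mem_direction_iff_mem hv x)).symm
  rw [hH]
  exact hf.indicator_fiber (isQuadratic_addMonoidHom π) (π v)

lemma indicator_compl {s : Set G} (hf : QuadraticBound f B)
    (hs : QuadraticBound (s.indicator f) B') : QuadraticBound (sᶜ.indicator f) (B + B') := by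
  rw [Set.indicator_compl]
  exact hf.sub hs

lemma card_le_of_constant_on {s : Finset G} (hs : QuadraticBound ((s : Set G).indicator f) B)
    (hf : ∀ x, ‖f x‖ = 1) (hconst : ∀ x ∈ s, ∀ y ∈ s, f x = f y) : (s.card : ℝ) ≤ B := by
  obtain rfl | ⟨x₀, hx₀⟩ := s.eq_empty_or_nonempty
  · simpa using hs.nonneg
  calc (s.card : ℝ) = ‖∑ x ∈ s, f x‖ := by
        rw [Finset.sum_congr rfl fun x hx => hconst x hx x₀ hx₀, Finset.sum_const, nsmul_eq_mul,
          norm_mul, hf, mul_one, Complex.norm_natCast]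
    _ = ‖∑ x, (s : Set G).indicator f x‖ := by
        rw [Finset.sum_indicator_subset f (Finset.subset_univ s)]
    _ ≤ B := hs.norm_sum_le

end QuadraticBound

end QuadraticBound

section Labels

variable {G : Type*} [AddCommGroup G]

/-- The label map of one term `c • ee Q • 1_H` of a decomposition, where `q` is a finite-valued
substitute for `Q`: the value of `q` on `H` and `none` off `H`. -/
noncomputable def termLabel {R A : Type*} [Ring R] [Module R G] (H : AffineSubspace R G)
    (q : G → A) (x : G) : Option A :=
  if x ∈ H then some (q x) else none

lemma termLabel_eq_termLabel_iff {R A : Type*} [Ring R] [Module R G] {H : AffineSubspace R G}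
    {q : G → A} {x y : G} : termLabel H q x = termLabel H q y ↔
      x ∈ H ∧ y ∈ H ∧ q x = q y ∨ x ∉ H ∧ y ∉ H := by
  by_cases hx : x ∈ H <;> by_cases hy : y ∈ H <;> simp [termLabel, hx, hy]

variable [Fintype G]

/-- Restricting to a fibre of `κ` at most multiplies a bound on quadratic correlations by `M`. -/
def HasFiberFactor {C : Type*} (κ : G → C) (M : ℝ) : Prop :=
  ∀ (f : G → ℂ) (B : ℝ), QuadraticBound f B → ∀ c,
    QuadraticBound ({x | κ x = c}.indicator f) (M * B)

lemma hasFiberFactor_termLabel {R A : Type*} [Ring R] [Module R G] [AddCommGroup A] [Finite A]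
    (H : AffineSubspace R G) {q : G → A} (hq : IsQuadratic q) :
    HasFiberFactor (termLabel H q) 2 := by
  intro f B hf c
  cases c with
  | none =>
    have hfiber : {x | termLabel H q x = none} = (H : Set G)ᶜ := by
      ext x
      simp [termLabel]
    rw [hfiber, two_mul]
    exact hf.indicator_compl (hf.indicator_affineSubspace H)
  | some a =>
    have hfiber : {x | termLabel H q x = some a} = (H : Set G) ∩ {x | q x = a} := by
      ext x
      simp [termLabel]
    rw [hfiber, ← Set.indicator_indicator]
    exact ((hf.indicator_fiber hq a).indicator_affineSubspace H).mono
      (by linarith [hf.nonneg])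

variable {ι C : Type*}

lemma HasFiberFactor.indicator_forall_mem {κ : ι → G → C} {M : ℝ}
    (hκ : ∀ i, HasFiberFactor (κ i) M) {f : G → ℂ} {B : ℝ} (hf : QuadraticBound f B)
    (c : ι → C) (s : Finset ι) :
    QuadraticBound ({x | ∀ i ∈ s, κ i x = c i}.indicator f) (M ^ s.card * B) := by
  induction s using Finset.induction_on with
  | empty => simpa using hf
  | insert i s hi ih =>
    have hcell : {x | ∀ j ∈ insert i s, κ j x = c j} =
        {x | κ i x = c i} ∩ {x | ∀ j ∈ s, κ j x = c j} := by
      ext x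
      simp
    rw [hcell, ← Set.indicator_indicator, Finset.card_insert_of_notMem hi, pow_succ', mul_assoc]
    exact hκ i _ _ ih (c i)

theorem HasFiberFactor.card_le [Fintype ι] [Fintype C] {κ : ι → G → C} {M : ℝ}
    (hκ : ∀ i, HasFiberFactor (κ i) M) {f : G → ℂ} {B : ℝ} (hB : QuadraticBound f B)
    (hf : ∀ x, ‖f x‖ = 1) (hfκ : f.FactorsThrough fun x i => κ i x) :
    (Fintype.card G : ℝ) ≤ (Fintype.card C * M) ^ Fintype.card ι * B := by
  let cell (c : ι → C) : Finset G := {x | (fun i => κ i x) = c}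
  have card_cell_le (c : ι → C) : ((cell c).card : ℝ) ≤ M ^ Fintype.card ι * B := by
    refine QuadraticBound.card_le_of_constant_on ?_ hf fun x hx y hy => hfκ ?_
    · simpa [cell, funext_iff] using HasFiberFactor.indicator_forall_mem hκ hB c Finset.univ
    · exact (Finset.mem_filter.1 hx).2.trans (Finset.mem_filter.1 hy).2.symm
  calc (Fintype.card G : ℝ) = ∑ c, ((cell c).card : ℝ) := by
        exact_mod_cast Finset.card_eq_sum_card_fiberwise (s := Finset.univ) (t := Finset.univ)
          (f := fun x i => κ i x) fun _ _ => Finset.mem_coe.2 (Finset.mem_univ _)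
    _ ≤ ∑ _c : ι → C, M ^ Fintype.card ι * B := Finset.sum_le_sum fun c _ => card_cell_le c
    _ = (Fintype.card C * M) ^ Fintype.card ι * B := by
        rw [Finset.sum_const, Finset.card_univ, Fintype.card_fun, nsmul_eq_mul, Nat.cast_pow,
          mul_pow, mul_assoc]

end Labels

section Decomposition

theorem card_le_of_eq_sum_quadratic {K V ι : Type*} [DivisionRing K] [AddCommGroup V] [Module K V]
    [Fintype V] [Fintype ι] {N : ℕ} [NeZero N] (hN : ∀ y : V, N • y = 0) {f : V → ℂ} {B : ℝ}
    (hB : QuadraticBound f B) (hf : ∀ x, ‖f x‖ = 1) {H : ι → AffineSubspace K V}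
    {Q : ι → V → UnitAddCircle} (hQ : ∀ i, IsQuadraticOn (H i) (Q i)) (c : ι → ℂ)
    (hdecomp : ∀ x, f x = ∑ i, c i * ee (Q i x) * (if x ∈ H i then (1 : ℂ) else 0)) :
    (Fintype.card V : ℝ) ≤ (2 * (N ^ 2 + 1)) ^ Fintype.card ι * B := by
  choose q hq hqQ using fun i => (hQ i).exists_isQuadratic_zmod hN
  have hfactor : f.FactorsThrough fun x i => termLabel (H i) (q i) x := by
    intro x y hxy
    rw [hdecomp, hdecomp]
    refine Finset.sum_congr rfl fun i _ => ?_
    have hi : termLabel (H i) (q i) x = termLabel (H i) (q i) y := congrFun hxy i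
    obtain ⟨hx, hy, hqxy⟩ | ⟨hx, hy⟩ := termLabel_eq_termLabel_iff.1 hi
    · rw [if_pos hx, if_pos hy, hqQ i x hx y hy hqxy]
    · rw [if_neg hx, if_neg hy, mul_zero, mul_zero]
  have hcard := HasFiberFactor.card_le (fun i => hasFiberFactor_termLabel (H i) (hq i)) hB hf
    hfactor
  rw [Fintype.card_option, ZMod.card] at hcard
  push_cast at hcard
  rwa [mul_comm (2 : ℝ)]

end Decomposition

section ProductPhase

variable {A : Type*} [AddCommGroup A] [Fintype A]

lemma norm_sum_product_phase_pow_eight_le {κ : Type*} [Fintype κ] [DecidableEq κ]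
    (φ : A → UnitAddCircle) {Q : (κ → A) → UnitAddCircle} (hQ : IsQuadratic Q) :
    ‖∑ x : κ → A, ee (∑ j, φ (x j)) * ee (Q x)‖ ^ 8 ≤
      ((Fintype.card A : ℝ) ^ 4 * ‖gowersSum φ‖) ^ Fintype.card κ := by
  have h := norm_phaseSum_pow_eight_le ((fun x : κ → A => ∑ j, φ (x j)) + Q)
  rw [gowersSum_add_of_isQuadratic _ hQ, gowersSum_pi, Finset.prod_const, Finset.card_univ,
    norm_pow, Fintype.card_fun, Nat.cast_pow, pow_right_comm, ← mul_pow] at h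
  simpa only [phaseSum, Pi.add_apply, ee_add] using h

lemma exists_lt_one_le_pow {a : ℝ} (ha : a < 1) {k : ℕ} (hk : k ≠ 0) :
    ∃ δ : ℝ, 0 < δ ∧ δ < 1 ∧ a ≤ δ ^ k := by
  have hpos : 0 < max a (1 / 2) := lt_max_of_lt_right one_half_pos
  refine ⟨max a (1 / 2) ^ (k⁻¹ : ℝ), by positivity, ?_, ?_⟩
  · exact Real.rpow_lt_one hpos.le (max_lt ha one_half_lt_one) (by positivity)
  · rw [Real.rpow_inv_natCast_pow hpos.le hk]
    exact le_max_left _ _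

theorem exists_quadraticBound_product_phase {φ : A → UnitAddCircle} (hφ : ¬ IsQuadratic φ) :
    ∃ δ : ℝ, 0 < δ ∧ δ < 1 ∧ ∀ n : ℕ,
      QuadraticBound (fun x : Fin n → A => ee (∑ j, φ (x j))) ((δ * Fintype.card A) ^ n) := by
  have hcard : (0 : ℝ) < (Fintype.card A : ℝ) ^ 4 := by positivity
  have hratio := (div_lt_one hcard).2 (norm_gowersSum_lt_of_not_isQuadratic hφ)
  obtain ⟨δ, hδ₀, hδ₁, hδ⟩ := exists_lt_one_le_pow hratio (k := 8) (by norm_num)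
  refine ⟨δ, hδ₀, hδ₁, fun n Q hQ => le_of_pow_le_pow_left₀ (n := 8) (by norm_num)
    (by positivity) ?_⟩
  calc _ ≤ ((Fintype.card A : ℝ) ^ 4 * ‖gowersSum φ‖) ^ n := by
        simpa only [Fintype.card_fin] using norm_sum_product_phase_pow_eight_le φ hQ
    _ ≤ ((Fintype.card A : ℝ) ^ 4 * (δ ^ 8 * (Fintype.card A : ℝ) ^ 4)) ^ n := by
        gcongr
        exact (div_le_iff₀ hcard).1 hδ
    _ = ((δ * Fintype.card A) ^ n) ^ 8 := by ring

end ProductPhase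

section MagicPhase

/-- The modulus `m` for which `magicPhase p n x` is the reduction of `|x| / m`. -/
def magicModulus (p : ℕ) : ℕ :=
  if p = 2 then 8 else p ^ 2

lemma two_mul_lt_magicModulus {p : ℕ} (hp : 2 ≤ p) : 2 * p < magicModulus p := by
  unfold magicModulus
  split_ifs with h
  · omega
  · have : 3 ≤ p := by omega
    nlinarith

/-- The phase `a ↦ |a| / m` of a single qudit. -/
noncomputable def quditPhase (p m : ℕ) (a : ZMod p) : UnitAddCircle :=
  ((a.val / m : ℝ) : UnitAddCircle)

lemma magicPhase_eq_sum (p n : ℕ) (x : Fin n → ZMod p) :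
    magicPhase p n x = ∑ i, quditPhase p (magicModulus p) (x i) := by
  have coe_sum (f : Fin n → ℝ) : ((∑ i, f i : ℝ) : UnitAddCircle) = ∑ i, (f i : UnitAddCircle) :=
    map_sum (QuotientAddGroup.mk' (AddSubgroup.zmultiples (1 : ℝ))) f Finset.univ
  unfold magicPhase quditPhase magicModulus
  rw [← coe_sum]
  split_ifs <;> simp only [Finset.sum_div, Nat.cast_ofNat, Nat.cast_pow]

lemma coe_ne_zero_of_mem_Ioo {t : ℝ} (ht : t ∈ Set.Ioo 0 1) : (t : UnitAddCircle) ≠ 0 := by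
  have : Fact ((0 : ℝ) < 1) := ⟨one_pos⟩
  rw [Ne, AddCircle.coe_eq_zero_iff_of_mem_Ico ⟨ht.1.le, ht.2⟩]
  exact ht.1.ne'

lemma zmod_val_neg_natCast {p k : ℕ} (hk₀ : 0 < k) (hk : k ≤ p) :
    ((-k : ZMod p).val : ℝ) = p - k := by
  rw [← zero_sub, ← ZMod.natCast_self p, ← Nat.cast_sub hk, ZMod.val_natCast_of_lt (by omega),
    Nat.cast_sub hk]

-- The third derivative in directions `1, 1, 1` at `-2` involves the values `p - 2, p - 1, 0, 1`
-- of `|·|`, which are not those of a quadratic because of the wrap-around from `p - 1` to `0`.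
lemma not_isQuadratic_quditPhase {p m : ℕ} (hp : 2 ≤ p) (hm : 2 * p < m) :
    ¬ IsQuadratic (quditPhase p m) := by
  intro hQ
  have : Fact (1 < p) := ⟨hp⟩
  have hm' : (2 * p : ℝ) < m := by exact_mod_cast hm
  have hp₀ : (0 : ℝ) < p := Nat.cast_pos.2 (by omega)
  have val_neg_one : ((-1 : ZMod p).val : ℝ) = p - 1 := by
    simpa using zmod_val_neg_natCast one_pos (by omega : 1 ≤ p)
  have val_neg_two : ((-2 : ZMod p).val : ℝ) = p - 2 := by
    simpa using zmod_val_neg_natCast two_pos hp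
  have hderiv := hQ 1 1 1 (-2)
  have neg_two_add_one : (-2 : ZMod p) + 1 = -1 := by ring
  simp only [addDeriv, neg_two_add_one, neg_add_cancel, zero_add, quditPhase, val_neg_one,
    val_neg_two, ZMod.val_zero, ZMod.val_one, ← AddCircle.coe_sub] at hderiv
  refine coe_ne_zero_of_mem_Ioo (t := 2 * p / m) ⟨?_, ?_⟩ ?_
  · exact div_pos (mul_pos two_pos hp₀) (by linarith)
  · exact (div_lt_one (by linarith)).2 hm'
  · rw [← hderiv]
    congr 1
    push_cast
    ring

end MagicPhase

lemma natCast_le_log_div_mul {K δ : ℝ} (hK : 0 < K) (hδ₀ : 0 < δ) (hδ₁ : δ < 1) {n r : ℕ}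
    (h : 1 ≤ K ^ r * δ ^ n) : (n : ℝ) ≤ Real.log K / -Real.log δ * r := by
  have hlog := Real.log_nonneg h
  rw [Real.log_mul (by positivity) (by positivity), Real.log_pow, Real.log_pow] at hlog
  rw [div_mul_eq_mul_div, le_div_iff₀ (neg_pos.2 (Real.log_neg hδ₀ hδ₁))]
  linarith

theorem stmt_19_general {F : Type*} [Field F] [Finite F] {φ : F → AddCircle (1 : ℝ)}
    (hφ : ¬ IsQuadratic φ) :
    ∃ C : ℝ, 0 < C ∧
      ∀ (n r : ℕ) (H : Fin r → AffineSubspace F (Fin n → F))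
        (Q : Fin r → (Fin n → F) → AddCircle (1 : ℝ)) (c : Fin r → ℂ),
        (∀ i, IsQuadraticOn (H i) (Q i)) →
        (∀ x, ee (∑ j, φ (x j))
            = ∑ i, c i * ee (Q i x) * (if x ∈ H i then (1 : ℂ) else 0)) →
        (n : ℝ) ≤ C * r := by
  have := Fintype.ofFinite F
  obtain ⟨δ, hδ₀, hδ₁, hδ⟩ := exists_quadraticBound_product_phase hφ
  set N := Fintype.card F
  set K : ℝ := 2 * (N ^ 2 + 1)
  have hK : 1 < K := by linarith [sq_nonneg (N : ℝ)]
  refine ⟨Real.log K / -Real.log δ, div_pos (Real.log_pos hK) (neg_pos.2 (Real.log_neg hδ₀ hδ₁)),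
    fun n r H Q c hQ hdecomp => ?_⟩
  have hN (y : Fin n → F) : N • y = 0 := funext fun j => card_nsmul_eq_zero
  have hcard := card_le_of_eq_sum_quadratic hN (hδ n) (fun _ => norm_ee _) hQ c hdecomp
  refine natCast_le_log_div_mul (by linarith) hδ₀ hδ₁ ?_
  have hNn : (0 : ℝ) < (N : ℝ) ^ n := by positivity
  rw [Fintype.card_fun, Fintype.card_fin, Fintype.card_fin, Nat.cast_pow, mul_pow δ,
    ← mul_assoc] at hcard
  exact le_of_mul_le_mul_right ((one_mul _).trans_le hcard) hNn

theorem stmt_19 (p : ℕ) [NeZero p] (hp : p.Prime) :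
    ∃ C : ℝ, 0 < C ∧
      ∀ (n r : ℕ), 1 ≤ n →
        ∀ (H : Fin r → AffineSubspace (ZMod p) (Fin n → ZMod p))
          (Q : Fin r → (Fin n → ZMod p) → AddCircle (1 : ℝ))
          (c : Fin r → ℂ),
          -- each `Q i` is a nonclassical polynomial of degree at most 2 on `H i`
          (∀ i, ∀ h₁ ∈ (H i).direction, ∀ h₂ ∈ (H i).direction, ∀ h₃ ∈ (H i).direction,
            ∀ x ∈ H i, addDeriv h₃ (addDeriv h₂ (addDeriv h₁ (Q i))) x = 0) →
          -- the decomposition of the magic-state amplitudes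
          (∀ x, ee (magicPhase p n x)
              = ∑ i, c i * ee (Q i x) * (if x ∈ H i then (1 : ℂ) else 0)) →
          (n : ℝ) ≤ C * r := by
  have := Fact.mk hp
  obtain ⟨C, hC, hbound⟩ := stmt_19_general (F := ZMod p)
    (not_isQuadratic_quditPhase hp.two_le (two_mul_lt_magicModulus hp.two_le))
  refine ⟨C, hC, fun n r _ H Q c hQ hdecomp => hbound n r H Q c hQ ?_⟩
  simpa only [magicPhase_eq_sum] using hdecomp
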